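/- Level bound for E11 roots of height at most 120: every nonzero n ∈ ℕ^{11} with ∑_i n_i ≤ 120 and nᵀ A(E11) n ≤ 2 (i.e. every positive root of E11 of height at most 120) has first coordinate n_1 ≤ 5; that is, the level with respect to the E10 subalgebra obtained by deleting the very extended node is at most 5 for all roots up to height 120. -/

import Mathlib

noncomputable section

/-- The Cartan matrix of `E11` (node 1 ↦ index `0` is the very extended node; indices `0`–`9`
form a chain and index `10` is attached to index `7`). -/
def E11M : Matrix (Fin 11) (Fin 11) ℤ := fun i j =>
  if i = j then 2
  else if (i.val + 1 = j.val ∧ j.val ≤ 9) ∨ (j.val + 1 = i.val ∧ i.val ≤ 9) ∨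
          (i.val = 7 ∧ j.val = 10) ∨ (i.val = 10 ∧ j.val = 7) then -1
  else 0

/-- The norm `nᵀ A n` of a vector of natural numbers with respect to a Cartan matrix. -/
def qform {d : ℕ} (A : Matrix (Fin d) (Fin d) ℤ) (n : Fin d → ℕ) : ℤ :=
  ∑ i, ∑ j, (n i : ℤ) * A i j * (n j : ℤ)

/-!
A vector of level `k` splits orthogonally as `α = 2kΛ + β`, where `Λ` is the fundamental weight of
the very extended node and `β` lies in `E10`. Here `Λ` has norm `1 / 2` and height `-29 / 2`, so `β`
has norm `(α, α) - 2k²` and height `ht α + 29k`. The form of `E10` is Lorentzian, and its Weyl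
vector has norm `-1240`, so the reverse Cauchy–Schwarz inequality gives
`1240 (2k² - (α, α)) ≤ (ht α + 29k)²`. If `k ≥ 6` and `(α, α) ≤ 2`, then `β` is timelike; its
coordinate at the node next to the very extended one is nonnegative, so it lies in the half of the
light cone on which the height is positive, whence `ht α ≥ √(2480 (k² - 1)) - 29k > 120`.
-/

section CommRing

variable {R : Type*} [CommRing R]

section CartanBilin

variable {ι : Type*} [Fintype ι] [DecidableEq ι]

/-- The invariant bilinear form, in simple-root coordinates over `R`, of an integral (generalized)
Cartan matrix; it is meant for symmetric matrices, and no symmetrization is built in. -/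
def cartanBilin (A : Matrix ι ι ℤ) : LinearMap.BilinForm R (ι → R) :=
  (A.map (Int.cast : ℤ → R)).toBilin'

theorem cartanBilin_apply (A : Matrix ι ι ℤ) (x y : ι → R) :
    cartanBilin A x y = ∑ i, ∑ j, x i * A i j * y j := by
  simp [cartanBilin, Matrix.toBilin'_apply]

theorem cartanBilin_isSymm {A : Matrix ι ι ℤ} (hA : A.IsSymm) :
    (cartanBilin A : LinearMap.BilinForm R (ι → R)).IsSymm :=
  Matrix.isSymm_toBilin'_iff_isSymm.mpr (hA.map _)

theorem cartanBilin_intCast_right (A : Matrix ι ι ℤ) (x : ι → R) (v : ι → ℤ) :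
    cartanBilin A x (fun i => (v i : R)) = ∑ i, x i * (A.mulVec v i : R) := by
  simp only [cartanBilin_apply, Matrix.mulVec, dotProduct, mul_assoc, ← Finset.mul_sum,
    Int.cast_sum, Int.cast_mul]

theorem cartanBilin_add_smul_intCast_self {A : Matrix ι ι ℤ} (hA : A.IsSymm) (x : ι → R) (c : R)
    (v : ι → ℤ) :
    cartanBilin A (x + c • fun i => (v i : R)) (x + c • fun i => (v i : R)) =
      cartanBilin A x x + 2 * c * ∑ i, x i * (A.mulVec v i : R) +
        c ^ 2 * ∑ i, (v i : R) * (A.mulVec v i : R) := by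
  simp only [← cartanBilin_intCast_right, map_add, map_smul, LinearMap.add_apply,
    LinearMap.smul_apply, smul_eq_mul, (cartanBilin_isSymm hA).eq (fun i => (v i : R)) x]
  ring

theorem sq_sum_le_of_mulVec_eq_one [LinearOrder R] [IsStrictOrderedRing R] {A : Matrix ι ι ℤ}
    (hA : A.IsSymm) (hnonneg : ∀ x : ι → R, 0 ≤ cartanBilin A x x) {ρ : ι → ℤ}
    (hρ : A.mulVec ρ = 1) (x : ι → R) :
    (∑ i, x i) ^ 2 ≤ (∑ i, (ρ i : R)) * cartanBilin A x x := by
  have pairing_eq_sum (y : ι → R) : cartanBilin A y (fun i => (ρ i : R)) = ∑ i, y i := by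
    simp [cartanBilin_intCast_right, hρ]
  have cauchy_schwarz := (cartanBilin A).apply_sq_le_of_symm hnonneg
    (LinearMap.BilinForm.isSymm_iff.mp (cartanBilin_isSymm hA)) x (fun i => (ρ i : R))
  rwa [pairing_eq_sum, pairing_eq_sum, mul_comm] at cauchy_schwarz

end CartanBilin

theorem intCast_qform {d : ℕ} (A : Matrix (Fin d) (Fin d) ℤ) (n : Fin d → ℕ) :
    (qform A n : R) = cartanBilin A (fun i => (n i : R)) (fun i => (n i : R)) := by
  simp [qform, cartanBilin_apply]

theorem cartanBilin_self_of_first_row {d : ℕ} {A : Matrix (Fin (d + 2)) (Fin (d + 2)) ℤ}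
    (hA : A.IsSymm) (hrow : A 0 = Fin.cons 2 (-Pi.single 0 1)) (x : Fin (d + 2) → R) :
    cartanBilin A x x = 2 * x 0 ^ 2 - 2 * x 0 * x 1 +
      cartanBilin (A.submatrix Fin.succ Fin.succ) (Fin.tail x) (Fin.tail x) := by
  have corner : A 0 0 = 2 := by simp [hrow]
  have row (j : Fin (d + 1)) : A 0 j.succ = if j = 0 then -1 else 0 := by
    simp only [hrow, Fin.cons_succ, Pi.neg_apply, Pi.single_apply]
    split_ifs <;> rfl
  have column (i : Fin (d + 1)) : A i.succ 0 = if i = 0 then -1 else 0 := by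
    rw [hA.apply, row]
  simp only [cartanBilin_apply, Fin.sum_univ_succ (n := d + 1), Finset.sum_add_distrib, corner, row,
    column, Matrix.submatrix_apply, Fin.tail]
  simp only [Int.cast_ofNat, Int.cast_ite, Int.cast_neg, Int.cast_one, Int.cast_zero, mul_ite,
    mul_neg, mul_one, mul_zero, ite_mul, neg_mul, zero_mul, Finset.sum_ite_eq', Finset.mem_univ,
    if_true, Fin.succ_zero_eq_one]
  ring

/-- The Cartan matrix of `E10`, on the nodes of `E11` other than the very extended one. -/
def E10M : Matrix (Fin 10) (Fin 10) ℤ := E11M.submatrix Fin.succ Fin.succ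

/-- The Cartan matrix of `E9`, the affine extension of `E8`; index `0` is the affine node. -/
def E9M : Matrix (Fin 9) (Fin 9) ℤ := E10M.submatrix Fin.succ Fin.succ

/-- The Cartan matrix of `E8`, whose nodes are numbered as inherited from `E11` and not as in
`CartanMatrix.E₈`: the indices `0`–`6` form a chain and index `7` is attached to index `4`. -/
def E8M : Matrix (Fin 8) (Fin 8) ℤ := E9M.submatrix Fin.succ Fin.succ

theorem E8M_eq : E8M =
    !![2, -1, 0, 0, 0, 0, 0, 0;
      -1, 2, -1, 0, 0, 0, 0, 0;
      0, -1, 2, -1, 0, 0, 0, 0;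
      0, 0, -1, 2, -1, 0, 0, 0;
      0, 0, 0, -1, 2, -1, 0, -1;
      0, 0, 0, 0, -1, 2, -1, 0;
      0, 0, 0, 0, 0, -1, 2, 0;
      0, 0, 0, 0, -1, 0, 0, 2] := by decide

theorem E11M_isSymm : E11M.IsSymm := by
  unfold Matrix.IsSymm; decide

theorem E10M_isSymm : E10M.IsSymm := E11M_isSymm.submatrix _

theorem E9M_isSymm : E9M.IsSymm := E10M_isSymm.submatrix _

theorem E8M_isSymm : E8M.IsSymm := E9M_isSymm.submatrix _

/-- The primitive positive null root of `E9`, which spans the radical of its form. -/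
def e9NullRoot : Fin 9 → ℤ := ![1, 2, 3, 4, 5, 6, 4, 2, 3]

theorem E9M_mulVec_e9NullRoot : E9M.mulVec e9NullRoot = 0 := by decide

theorem E10M_mulVec_cons_e9NullRoot :
    E10M.mulVec (Fin.cons 0 e9NullRoot) = -Pi.single 0 1 := by decide

theorem sum_e9NullRoot : ∑ i, (e9NullRoot i : R) = 30 := by
  exact_mod_cast congrArg (Int.cast : ℤ → R) (by decide : ∑ i, e9NullRoot i = 30)

/-- The `E8` component of an `E9` vector: the coordinates that are left once the multiple of the
null root having the same affine coordinate is subtracted. -/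
def e8Part (z : Fin 9 → R) : Fin 8 → R :=
  Fin.tail (z + (-z 0) • fun i => (e9NullRoot i : R))

/-- The orthogonal projection of an `E11` vector to `E10`. The fundamental weight `Λ` of the very
extended node satisfies `2Λ = α₀ - δ`, where `α₀` is the simple root at that node and `δ` the null
root, so projecting adds `x 0 • δ` to the `E10` coordinates. -/
def e10Part (x : Fin 11 → R) : Fin 10 → R :=
  Fin.tail x + x 0 • fun i => ((Fin.cons 0 e9NullRoot : Fin 10 → ℤ) i : R)

theorem cartanBilin_E9M_self (z : Fin 9 → R) :
    cartanBilin E9M z z = cartanBilin E8M (e8Part z) (e8Part z) := by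
  have shift := cartanBilin_add_smul_intCast_self E9M_isSymm z (-z 0) e9NullRoot
  have affine_coord_eq_zero : (z + (-z 0) • fun i => (e9NullRoot i : R)) 0 = 0 := by
    simp [e9NullRoot]
  rw [cartanBilin_self_of_first_row E9M_isSymm (by decide), affine_coord_eq_zero,
    E9M_mulVec_e9NullRoot] at shift
  simpa [e8Part, E8M] using shift.symm

theorem sum_eq_sum_e8Part (z : Fin 9 → R) : ∑ i, z i = 30 * z 0 + ∑ i, e8Part z i := by
  have height_δ := sum_e9NullRoot (R := R)
  rw [Fin.sum_univ_succ] at height_δ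
  have tail_height : ∑ i : Fin 8, (e9NullRoot i.succ : R) = 29 := by
    have δ_zero : (e9NullRoot 0 : R) = 1 := by simp [e9NullRoot]
    linear_combination height_δ - δ_zero
  simp only [e8Part, Fin.tail, Pi.add_apply, Pi.smul_apply, smul_eq_mul, Finset.sum_add_distrib,
    ← Finset.mul_sum, tail_height, Fin.sum_univ_succ z]
  ring

theorem cartanBilin_E10M_self (x : Fin 10 → R) :
    cartanBilin E10M x x =
      cartanBilin E8M (e8Part (Fin.tail x)) (e8Part (Fin.tail x)) - 2 * x 0 * (x 1 - x 0) := by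
  rw [cartanBilin_self_of_first_row E10M_isSymm (by decide), ← cartanBilin_E9M_self, E9M]
  ring

theorem sum_eq_sum_e8Part_tail (x : Fin 10 → R) :
    ∑ i, x i = 31 * x 0 + 30 * (x 1 - x 0) + ∑ i, e8Part (Fin.tail x) i := by
  calc ∑ i, x i = x 0 + ∑ i, Fin.tail x i := Fin.sum_univ_succ x
    _ = x 0 + (30 * x 1 + ∑ i, e8Part (Fin.tail x) i) := by rw [sum_eq_sum_e8Part]; rfl
    _ = 31 * x 0 + 30 * (x 1 - x 0) + ∑ i, e8Part (Fin.tail x) i := by ring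

theorem cartanBilin_E11M_self (x : Fin 11 → R) :
    cartanBilin E11M x x = 2 * x 0 ^ 2 + cartanBilin E10M (e10Part x) (e10Part x) := by
  have pairing_δ :
      ∑ i, Fin.tail x i * (E10M.mulVec (Fin.cons 0 e9NullRoot) i : R) = -x 1 := by
    simp [E10M_mulVec_cons_e9NullRoot, Pi.single_apply, Fin.tail]
  have norm_δ : ∑ i, ((Fin.cons 0 e9NullRoot : Fin 10 → ℤ) i : R) *
      (E10M.mulVec (Fin.cons 0 e9NullRoot) i : R) = 0 := by
    simp [E10M_mulVec_cons_e9NullRoot, Pi.single_apply]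
  rw [cartanBilin_self_of_first_row E11M_isSymm (by decide), e10Part,
    cartanBilin_add_smul_intCast_self E10M_isSymm, pairing_δ, norm_δ, E10M]
  ring

theorem sum_e10Part (x : Fin 11 → R) : ∑ i, e10Part x i = ∑ i, x i + 29 * x 0 := by
  have height_δ : ∑ i, ((Fin.cons 0 e9NullRoot : Fin 10 → ℤ) i : R) = 30 := by
    simp [Fin.sum_univ_succ (n := 9), sum_e9NullRoot]
  simp only [e10Part, Pi.add_apply, Pi.smul_apply, smul_eq_mul, Finset.sum_add_distrib,
    ← Finset.mul_sum, height_δ, Fin.tail, Fin.sum_univ_succ x]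
  ring

end CommRing

section Ordered

variable {R : Type*} [CommRing R] [LinearOrder R] [IsStrictOrderedRing R]

theorem cartanBilin_E8M_self_nonneg (y : Fin 8 → R) : 0 ≤ cartanBilin E8M y y := by
  have sum_of_squares : 60 * cartanBilin E8M y y =
      30 * (2 * y 0 - y 1) ^ 2 + 10 * (3 * y 1 - 2 * y 2) ^ 2 + 5 * (4 * y 2 - 3 * y 3) ^ 2 +
        3 * (5 * y 3 - 4 * y 4) ^ 2 + 30 * (2 * y 6 - y 5) ^ 2 + 10 * (3 * y 5 - 2 * y 4) ^ 2 +
        30 * (2 * y 7 - y 4) ^ 2 + 2 * y 4 ^ 2 := by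
    simp only [cartanBilin_apply, E8M_eq, Fin.sum_univ_eight, Matrix.of_apply, Matrix.cons_val]
    push_cast
    ring
  refine nonneg_of_mul_nonneg_right (a := 60) ?_ (by norm_num)
  rw [sum_of_squares]
  positivity

theorem sq_sum_le_cartanBilin_E8M (y : Fin 8 → R) :
    (∑ i, y i) ^ 2 ≤ 620 * cartanBilin E8M y y := by
  -- The Weyl vector of `E8`; its height `620` is also its norm.
  let ρ : Fin 8 → ℤ := ![29, 57, 84, 110, 135, 91, 46, 68]
  have hρ : E8M.mulVec ρ = 1 := by decide
  have height_ρ : ∑ i, (ρ i : R) = 620 := by exact_mod_cast (by decide : ∑ i, ρ i = 620)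
  rw [← height_ρ]
  exact sq_sum_le_of_mulVec_eq_one E8M_isSymm cartanBilin_E8M_self_nonneg hρ y

theorem neg_cartanBilin_E10M_le_sq_sum (x : Fin 10 → R) :
    -(1240 * cartanBilin E10M x x) ≤ (∑ i, x i) ^ 2 := by
  rw [cartanBilin_E10M_self, sum_eq_sum_e8Part_tail]
  have cauchy_schwarz := sq_sum_le_cartanBilin_E8M (e8Part (Fin.tail x))
  set a := x 0
  set u := x 1 - x 0
  set w := ∑ i, e8Part (Fin.tail x) i
  -- Three times the difference is `(3w + 31a + 30u)² + 2(31a - 30u)²` once the `E8` norm is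
  -- replaced by its lower bound `w² / 620`.
  linarith [sq_nonneg (3 * w + (31 * a + 30 * u)), sq_nonneg (31 * a - 30 * u)]

theorem sum_pos_of_cartanBilin_E10M_neg {x : Fin 10 → R} (h0 : 0 ≤ x 0)
    (hx : cartanBilin E10M x x < 0) : 0 < ∑ i, x i := by
  rw [cartanBilin_E10M_self] at hx
  rw [sum_eq_sum_e8Part_tail]
  have cauchy_schwarz := sq_sum_le_cartanBilin_E8M (e8Part (Fin.tail x))
  have norm_nonneg := cartanBilin_E8M_self_nonneg (e8Part (Fin.tail x))
  set a := x 0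
  set u := x 1 - x 0
  set w := ∑ i, e8Part (Fin.tail x) i
  have mul_au_pos : 0 < a * u := by linarith
  have hu : 0 < u := pos_of_mul_pos_right mul_au_pos h0
  have sq_lt : w ^ 2 < (31 * a + 30 * u) ^ 2 := by
    linarith [sq_nonneg (31 * a - 30 * u)]
  linarith [(abs_lt_of_sq_lt_sq' sq_lt (by positivity)).1]

theorem level_sq_le_sq_sum (x : Fin 11 → R) :
    1240 * (2 * x 0 ^ 2 - cartanBilin E11M x x) ≤ (∑ i, x i + 29 * x 0) ^ 2 := by
  have reverse_cauchy_schwarz := neg_cartanBilin_E10M_le_sq_sum (e10Part x)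
  rw [sum_e10Part] at reverse_cauchy_schwarz
  linarith [cartanBilin_E11M_self x]

theorem sum_add_level_pos {x : Fin 11 → R} (h1 : 0 ≤ x 1)
    (hx : cartanBilin E11M x x < 2 * x 0 ^ 2) : 0 < ∑ i, x i + 29 * x 0 := by
  rw [← sum_e10Part]
  apply sum_pos_of_cartanBilin_E10M_neg
  · simpa [e10Part, Fin.tail] using h1
  · linarith [cartanBilin_E11M_self x]

theorem e11_level_bound_general (x : Fin 11 → R) (h1 : 0 ≤ x 1) (hsum : ∑ i, x i ≤ 120)
    (hx : cartanBilin E11M x x ≤ 2) : x 0 < 6 := by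
  by_contra! hlevel
  have timelike : cartanBilin E11M x x < 2 * x 0 ^ 2 := by nlinarith
  have height_sq_le : (∑ i, x i + 29 * x 0) ^ 2 ≤ (120 + 29 * x 0) ^ 2 :=
    pow_le_pow_left₀ (sum_add_level_pos h1 timelike).le (by linarith) 2
  have norm_le : 2480 * (x 0 ^ 2 - 1) ≤ (120 + 29 * x 0) ^ 2 := by
    linarith [level_sq_le_sq_sum x]
  have : 0 ≤ (x 0 - 6) * (1639 * x 0 + 2874) := mul_nonneg (by linarith) (by linarith)
  linarith

end Ordered

/-- **Level bound for `E11` roots of height at most 120.** Every positive root of `E11` of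
height at most `120` (a nonzero `n ∈ ℕ¹¹` with `nᵀ A(E11) n ≤ 2`) has level `n 0 ≤ 5` with
respect to the `E10` subalgebra obtained by deleting the very extended node (index `0`). -/
theorem e11_level_bound :
    ∀ n : Fin 11 → ℕ, n ≠ 0 → ∑ i, n i ≤ 120 → qform E11M n ≤ 2 → n 0 ≤ 5 := by
  intro n _ hsum hq
  have hlevel := e11_level_bound_general (fun i => (n i : ℤ)) (by positivity)
    (by exact_mod_cast hsum) (by rwa [← intCast_qform, Int.cast_id])
  lia
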